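/- arXiv:2409.06475 — 2 statements merged into one kernel-verified Lean document; each statement's English description precedes it below -/
import Mathlib

section
/- Let f : E → B be a dominant morphism of irreducible varieties over an algebraically closed field, and let U ⊆ E be a dense open subset. Then there exists a dense open subset B₀ ⊆ B such that for all b ∈ B₀, the intersection f⁻¹(b) ∩ U is dense in the fibre f⁻¹(b). -/
open AlgebraicGeometry CategoryTheory
open scoped nonZeroDivisors

theorem aux_noether_abs {A S F SF : Type*} [CommRing A] [IsDomain A] [CommRing S] [IsDomain S]
    [Algebra A S] [FaithfulSMul A S] [Algebra.FiniteType A S] [Field F] [Algebra A F]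
    [IsFractionRing A F] [CommRing SF] [Algebra S SF] [Algebra F SF] [Algebra A SF]
    [IsScalarTower A S SF] [IsScalarTower A F SF]
    [IsLocalization (Algebra.algebraMapSubmonoid S A⁰) SF] [Algebra.FiniteType F SF] :
    ∃ (s : ℕ) (ψ : MvPolynomial (Fin s) A →ₐ[A] S), Function.Injective ψ ∧
      ∃ a : A, a ≠ 0 ∧ ∀ x : S, ∃ n : ℕ, ψ.toRingHom.IsIntegralElem (algebraMap A S a ^ n * x) := by
  have hinjA : Function.Injective (algebraMap A S) := FaithfulSMul.algebraMap_injective A S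
  have hM : Algebra.algebraMapSubmonoid S A⁰ ≤ S⁰ := by
    rintro _ ⟨x, hx, rfl⟩
    rw [mem_nonZeroDivisors_iff_ne_zero]
    exact (map_ne_zero_iff _ hinjA).mpr (nonZeroDivisors.ne_zero hx)
  have hinj : Function.Injective (algebraMap S SF) := IsLocalization.injective SF hM
  have : Nontrivial SF := hinj.nontrivial
  obtain ⟨s, φ, hφi, hφ⟩ := exists_integral_inj_algHom_of_fg F SF
  -- clear denominators in the images of the variables
  obtain ⟨⟨_, d, hd, rfl⟩, hdint⟩ := IsLocalization.exist_integer_multiples_of_finite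
    (Algebra.algebraMapSubmonoid S A⁰) (fun i : Fin s => φ (MvPolynomial.X i))
  choose t ht using hdint
  have hd0 : algebraMap A F d ≠ 0 :=
    (map_ne_zero_iff _ (IsFractionRing.injective A F)).mpr (nonZeroDivisors.ne_zero hd)
  let σ : MvPolynomial (Fin s) F →ₐ[F] MvPolynomial (Fin s) F :=
    MvPolynomial.aeval (fun i => MvPolynomial.C (algebraMap A F d) * MvPolynomial.X i)
  let τ : MvPolynomial (Fin s) F →ₐ[F] MvPolynomial (Fin s) F :=
    MvPolynomial.aeval (fun i => MvPolynomial.C (algebraMap A F d)⁻¹ * MvPolynomial.X i)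
  have hτσ : ∀ x, τ (σ x) = x := by
    intro x
    have : τ.comp σ = AlgHom.id F _ := by
      ext i : 1
      simp only [AlgHom.comp_apply, MvPolynomial.aeval_X, map_mul, MvPolynomial.algHom_C, σ, τ,
        AlgHom.id_apply, MvPolynomial.algebraMap_eq]
      rw [← mul_assoc, ← map_mul]
      simp [hd0]
    exact DFunLike.congr_fun this x
  have hστ : ∀ x, σ (τ x) = x := by
    intro x
    have : σ.comp τ = AlgHom.id F _ := by
      ext i : 1
      simp only [AlgHom.comp_apply, MvPolynomial.aeval_X, map_mul, MvPolynomial.algHom_C, σ, τ,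
        AlgHom.id_apply, MvPolynomial.algebraMap_eq]
      rw [← mul_assoc, ← map_mul]
      simp [hd0]
    exact DFunLike.congr_fun this x
  let φ' : MvPolynomial (Fin s) F →ₐ[F] SF := φ.comp σ
  have hφ'i : Function.Injective φ' :=
    hφi.comp (Function.LeftInverse.injective hτσ)
  have hφ' : φ'.toRingHom.IsIntegral := 
    (RingHom.isIntegral_of_surjective σ.toRingHom (Function.RightInverse.surjective hστ)).trans
      σ.toRingHom φ.toRingHom hφ
  let ψ : MvPolynomial (Fin s) A →ₐ[A] S := MvPolynomial.aeval t
  let := MvPolynomial.algebraMvPolynomial (R := A) (S := F) (σ := Fin s)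
  have hcomm : (φ'.toRingHom.comp (algebraMap (MvPolynomial (Fin s) A) (MvPolynomial (Fin s) F)))
      = (algebraMap S SF).comp ψ.toRingHom := by
    rw [MvPolynomial.algebraMap_def]
    apply MvPolynomial.ringHom_ext
    · intro r
      simp [φ', ψ, σ, ← IsScalarTower.algebraMap_apply]
    · intro i
      simp [φ', ψ, σ, ht, Algebra.smul_def,
        ← IsScalarTower.algebraMap_apply]
  have hψi : Function.Injective ψ := by
    have h1 : Function.Injective ((algebraMap S SF).comp ψ.toRingHom) := by
      rw [← hcomm]
      refine hφ'i.comp ?_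
      rw [MvPolynomial.algebraMap_def]
      exact MvPolynomial.map_injective _ (IsFractionRing.injective A F)
    exact Function.Injective.of_comp h1
  refine ⟨s, ψ, hψi, ?_⟩
  have key : ∀ x : S, ∃ a : A, a ≠ 0 ∧ ψ.toRingHom.IsIntegralElem (algebraMap A S a * x) := by
    intro x
    let := ψ.toRingHom.toAlgebra
    let := φ'.toRingHom.toAlgebra
    let := ((algebraMap S SF).comp ψ.toRingHom).toAlgebra
    have : IsScalarTower (MvPolynomial (Fin s) A) (MvPolynomial (Fin s) F) SF :=
      .of_algebraMap_eq' hcomm.symm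
    have : IsScalarTower (MvPolynomial (Fin s) A) S SF := .of_algebraMap_eq' rfl
    have hx : IsIntegral (MvPolynomial (Fin s) F) (algebraMap S SF x) := hφ' _
    obtain ⟨⟨_, m, hm, rfl⟩, h⟩ := hx.exists_multiple_integral_of_isLocalization
      (A⁰.map (MvPolynomial.C (σ := Fin s)))
    refine ⟨m, nonZeroDivisors.ne_zero hm, ?_⟩
    rw [Submonoid.smul_def, Algebra.smul_def, IsScalarTower.algebraMap_apply _ S SF, ← map_mul,
      isIntegral_algebraMap_iff hinj] at h
    have e : algebraMap (MvPolynomial (Fin s) A) S (MvPolynomial.C m) = algebraMap A S m :=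
      ψ.commutes m
    rw [← e]
    exact h
  classical
  choose a ha0 ha using key
  obtain ⟨G, hG⟩ := (Algebra.FiniteType.out : (⊤ : Subalgebra A S).FG)
  refine ⟨∏ x ∈ G, a x, Finset.prod_ne_zero_iff.mpr fun x _ => ha0 x, fun x => ?_⟩
  let := ψ.toRingHom.toAlgebra
  have hC : ∀ c : A, IsIntegral (MvPolynomial (Fin s) A) (algebraMap A S c) := by
    intro c
    have e : algebraMap (MvPolynomial (Fin s) A) S (MvPolynomial.C c) = algebraMap A S c :=
      ψ.commutes c
    rw [← e]
    exact isIntegral_algebraMap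
  change ∃ n : ℕ, IsIntegral (MvPolynomial (Fin s) A) _
  have hx : x ∈ Algebra.adjoin A (G : Set S) := hG ▸ Algebra.mem_top
  induction hx using Algebra.adjoin_induction with
  | mem x hx =>
    refine ⟨1, ?_⟩
    rw [pow_one, ← Finset.prod_erase_mul _ _ hx, map_mul, mul_assoc]
    exact (hC _).mul (ha x)
  | algebraMap r => exact ⟨0, by simpa using hC r⟩
  | add x y _ _ hx hy =>
    obtain ⟨n, hn⟩ := hx
    obtain ⟨m, hm⟩ := hy
    refine ⟨n + m, ?_⟩
    have := (((hC (∏ x ∈ G, a x)).pow m).mul hn).add (((hC (∏ x ∈ G, a x)).pow n).mul hm)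
    convert this using 1
    ring
  | mul x y _ _ hx hy =>
    obtain ⟨n, hn⟩ := hx
    obtain ⟨m, hm⟩ := hy
    refine ⟨n + m, ?_⟩
    convert hn.mul hm using 1
    ring

theorem aux_noether {A S : Type*} [CommRing A] [IsDomain A] [CommRing S] [IsDomain S]
    [Algebra A S] [FaithfulSMul A S] [Algebra.FiniteType A S] :
    ∃ (s : ℕ) (ψ : MvPolynomial (Fin s) A →ₐ[A] S), Function.Injective ψ ∧
      ∃ a : A, a ≠ 0 ∧ ∀ x : S, ∃ n : ℕ, ψ.toRingHom.IsIntegralElem (algebraMap A S a ^ n * x) := by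
  let : Algebra S (TensorProduct A (FractionRing A) S) := Algebra.TensorProduct.rightAlgebra
  exact aux_noether_abs (F := FractionRing A) (SF := TensorProduct A (FractionRing A) S)

/-- Generic density, algebraic form over a factorial base. -/
theorem aux_ufd {A S : Type*} [CommRing A] [IsDomain A] [UniqueFactorizationMonoid A]
    [CommRing S] [IsDomain S]
    [Algebra A S] [FaithfulSMul A S] [Algebra.FiniteType A S] (g : S) (hg : g ≠ 0) :
    ∃ c : A, c ≠ 0 ∧ ∀ q : Ideal S, q.IsPrime → algebraMap A S c ∉ q →
      ∃ q' : Ideal S, q'.IsPrime ∧ q' ≤ q ∧ g ∉ q' ∧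
        q'.comap (algebraMap A S) = q.comap (algebraMap A S) := by
  obtain ⟨s, ψ, hψ, a, ha, hint⟩ := aux_noether (A := A) (S := S)
  have hinjA : Function.Injective (algebraMap A S) := FaithfulSMul.algebraMap_injective A S
  let := ψ.toRingHom.toAlgebra
  have : IsScalarTower A (MvPolynomial (Fin s) A) S := .of_algebraMap_eq fun x => (ψ.commutes x).symm
  have : FaithfulSMul (MvPolynomial (Fin s) A) S :=
    (faithfulSMul_iff_algebraMap_injective _ _).mpr hψ
  let T := integralClosure (MvPolynomial (Fin s) A) S
  let aT : T := algebraMap (MvPolynomial (Fin s) A) T (MvPolynomial.C a)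
  have haT : algebraMap T S aT = algebraMap A S a := ψ.commutes a
  have haS : algebraMap A S a ≠ 0 := (map_ne_zero_iff _ hinjA).mpr ha
  let Sa := Localization.Away (algebraMap A S a)
  have hinjS : Function.Injective (algebraMap S Sa) :=
    IsLocalization.injective Sa (powers_le_nonZeroDivisors_of_noZeroDivisors haS)
  have : IsLocalization.Away aT Sa := by
    refine ⟨?_, ?_, ?_⟩
    · rintro ⟨_, n, rfl⟩
      rw [map_pow, IsScalarTower.algebraMap_apply T S Sa, haT]
      exact (IsLocalization.Away.algebraMap_isUnit (algebraMap A S a)).pow n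
    · intro z
      obtain ⟨n, x, hx⟩ := IsLocalization.Away.surj (algebraMap A S a) z
      obtain ⟨m, hm⟩ := hint x
      refine ⟨⟨⟨_, hm⟩, ⟨aT ^ (n + m), n + m, rfl⟩⟩, ?_⟩
      simp only [IsScalarTower.algebraMap_apply T S Sa, map_pow, haT]
      change _ = algebraMap S Sa (algebraMap A S a ^ m * x)
      rw [map_mul, ← hx, map_pow]
      ring
    · intro x y hxy
      refine ⟨1, ?_⟩
      rw [IsScalarTower.algebraMap_apply T S Sa, IsScalarTower.algebraMap_apply T S Sa] at hxy
      rw [Subtype.ext (hinjS hxy)]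
  have : Module.Flat T Sa := IsLocalization.flat Sa (Submonoid.powers aT)
  have : FaithfulSMul (MvPolynomial (Fin s) A) T := by
    rw [faithfulSMul_iff_algebraMap_injective]
    exact Function.Injective.of_comp (f := algebraMap T S) hψ
  have : Algebra.HasGoingDown (MvPolynomial (Fin s) A) Sa :=
    Algebra.HasGoingDown.trans _ T _
  -- nonzero multiple of g in P
  obtain ⟨n, hn⟩ := hint g
  have halg : IsAlgebraic (MvPolynomial (Fin s) A) (algebraMap A S a ^ n * g) :=
    IsIntegral.isAlgebraic hn
  obtain ⟨G, hG0, hgG⟩ := halg.exists_nonzero_dvd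
    (mem_nonZeroDivisors_of_ne_zero (mul_ne_zero (pow_ne_zero n haS) hg))
  replace hgG := (Dvd.intro_left _ rfl).trans hgG
  obtain ⟨m, hm⟩ := MvPolynomial.ne_zero_iff.mp hG0
  refine ⟨a * G.coeff m, mul_ne_zero ha hm, fun q hq hcq => ?_⟩
  rw [map_mul] at hcq
  have haq : algebraMap A S a ∉ q := fun h => hcq (q.mul_mem_right _ h)
  have hmq : algebraMap A S (G.coeff m) ∉ q := fun h => hcq (q.mul_mem_left _ h)
  have hdisj : Disjoint (Submonoid.powers (algebraMap A S a) : Set S) q := by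
    rw [Set.disjoint_left]
    rintro _ ⟨n, rfl⟩ h
    exact haq (hq.mem_of_pow_mem n h)
  let Q : Ideal Sa := q.map (algebraMap S Sa)
  have hQ : Q.IsPrime := IsLocalization.isPrime_of_isPrime_disjoint _ Sa q hq hdisj
  have hQq : Q.comap (algebraMap S Sa) = q :=
    IsLocalization.under_map_of_isPrime_disjoint (Submonoid.powers (algebraMap A S a)) Sa hq hdisj
  let p : Ideal A := q.comap (algebraMap A S)
  let r : Ideal (MvPolynomial (Fin s) A) := RingHom.ker (MvPolynomial.map (Ideal.Quotient.mk p))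
  have : r.IsPrime := RingHom.ker_isPrime _
  have hr : ∀ F : MvPolynomial (Fin s) A, F ∈ r ↔ ∀ i, algebraMap A S (F.coeff i) ∈ q := by
    intro F
    rw [RingHom.mem_ker, MvPolynomial.ext_iff]
    refine forall_congr' fun i => ?_
    rw [MvPolynomial.coeff_map, MvPolynomial.coeff_zero, Ideal.Quotient.eq_zero_iff_mem]
    rfl
  have hle : r ≤ Q.under (MvPolynomial (Fin s) A) := by
    intro F hF
    rw [hr] at hF
    rw [Ideal.mem_comap, IsScalarTower.algebraMap_apply _ S Sa]
    refine Ideal.mem_map_of_mem _ ?_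
    rw [F.as_sum, map_sum]
    refine q.sum_mem fun i _ => ?_
    rw [← mul_one (F.coeff i), ← smul_eq_mul, ← MvPolynomial.smul_monomial, Algebra.smul_def, map_mul,
      ← IsScalarTower.algebraMap_apply]
    exact q.mul_mem_right _ (hF i)
  obtain ⟨P, hPQ, hP, hPr⟩ := Ideal.exists_ideal_le_liesOver_of_le (p := r)
    (q := Q.under (MvPolynomial (Fin s) A)) Q hle
  have hover : ∀ F, F ∈ r ↔ algebraMap S Sa (algebraMap _ S F) ∈ P := by
    intro F
    rw [hPr.over, Ideal.mem_comap, IsScalarTower.algebraMap_apply _ S Sa]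
  refine ⟨P.comap (algebraMap S Sa), inferInstance, ?_, ?_, ?_⟩
  · rw [← hQq]
    exact Ideal.comap_mono hPQ
  · intro h
    obtain ⟨w, hw⟩ := hgG
    have : G ∈ r := by
      rw [hover, hw, map_mul]
      exact P.mul_mem_right _ h
    exact hmq ((hr G).mp this m)
  · ext x
    have h1 := (hover (MvPolynomial.C x)).symm.trans (hr (MvPolynomial.C x))
    have e : algebraMap (MvPolynomial (Fin s) A) S (MvPolynomial.C x) = algebraMap A S x :=
      ψ.commutes x
    rw [e] at h1
    rw [Ideal.mem_comap, Ideal.mem_comap, h1, Ideal.mem_comap]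
    constructor
    · intro h
      simpa using h 0
    · intro h i
      rw [MvPolynomial.coeff_C]
      split_ifs
      · exact h
      · simp

/-- Generic density, algebraic form over a finitely generated algebra over a field. -/
theorem aux_field {k A S : Type*} [Field k] [CommRing A] [IsDomain A] [CommRing S] [IsDomain S]
    (j : k →+* A) (hj : j.FiniteType) (φ : A →+* S) (hφ : φ.FiniteType)
    (hinj : Function.Injective φ) (g : S) (hg : g ≠ 0) :
    ∃ c : A, c ≠ 0 ∧ ∀ q : Ideal S, q.IsPrime → φ c ∉ q →
      ∃ q' : Ideal S, q'.IsPrime ∧ q' ≤ q ∧ g ∉ q' ∧ q'.comap φ = q.comap φ := by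
  let := j.toAlgebra
  have : Algebra.FiniteType k A := hj
  obtain ⟨n, ρ, hρ, hρf⟩ := exists_finite_inj_algHom_of_fg k A
  let := (φ.comp ρ.toRingHom).toAlgebra
  have : FaithfulSMul (MvPolynomial (Fin n) k) S :=
    (faithfulSMul_iff_algebraMap_injective _ _).mpr (hinj.comp hρ)
  have : Algebra.FiniteType (MvPolynomial (Fin n) k) S :=
    RingHom.FiniteType.comp hφ (RingHom.FiniteType.of_finite hρf)
  obtain ⟨c, hc, H⟩ := aux_ufd (A := MvPolynomial (Fin n) k) (S := S) g hg
  refine ⟨ρ c, (map_ne_zero_iff _ hρ).mpr hc, fun q hq hcq => ?_⟩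
  obtain ⟨q', hq', hle, hgq, hcomap⟩ := H q hq hcq
  refine ⟨q', hq', hle, hgq, ?_⟩
  let := ρ.toRingHom.toAlgebra
  have : Algebra.IsIntegral (MvPolynomial (Fin n) k) A := ⟨RingHom.Finite.to_isIntegral hρf⟩
  by_contra hne
  have hlt : q'.comap φ < q.comap φ := lt_of_le_of_ne (Ideal.comap_mono hle) hne
  have := Ideal.IsIntegral.comap_lt_comap (R := MvPolynomial (Fin n) k) hlt
  rw [Ideal.comap_comap, Ideal.comap_comap] at this
  exact this.ne hcomap

/-- Local form of the statement on an affine open of the source. -/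
theorem aux_geo {k : Type} [Field k] {E B : Scheme} (sB : B ⟶ Spec (CommRingCat.of k))
    [IsIntegral E] [IsIntegral B] [LocallyOfFiniteType sB]
    (f : E ⟶ B) [LocallyOfFiniteType f] [QuasiCompact f] [IsDominant f]
    (U : Set E) (hUopen : IsOpen U) (hUdense : Dense U)
    (V : B.Opens) (hV : IsAffineOpen V) (W : E.Opens) (hW : IsAffineOpen W) (hWV : W ≤ f ⁻¹ᵁ V)
    (hne : (W : Set E).Nonempty) :
    ∃ B₀ : Set B, IsOpen B₀ ∧ B₀.Nonempty ∧ ∀ x ∈ W, f x ∈ B₀ → ∃ y ∈ U, y ⤳ x ∧ f y = f x := by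
  have hWne : Nonempty W := ⟨⟨hne.some, hne.some_mem⟩⟩
  have hVne : Nonempty V := ⟨⟨f hne.some, hWV hne.some_mem⟩⟩
  have hdom : IsSchemeTheoreticallyDominant f := .of_isDominant f
  -- the ring maps
  let φ : Γ(B, V) →+* Γ(E, W) := (f.appLE V W hWV).hom
  have hφ : φ.FiniteType := f.finiteType_appLE hV hW hWV
  have hφi : Function.Injective φ := by
    have h1 : Function.Injective (f.app V) := f.app_injective V
    have h2 : Function.Injective (E.presheaf.map (homOfLE hWV).op) :=
      map_injective_of_isIntegral E (homOfLE hWV)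
    exact h2.comp h1
  let j : k →+* Γ(B, V) :=
    ((Scheme.ΓSpecIso (CommRingCat.of k)).inv ≫ sB.appLE ⊤ V le_top).hom
  have hj : j.FiniteType := by
    have h1 := sB.finiteType_appLE (isAffineOpen_top _) hV le_top
    have h2 : (Scheme.ΓSpecIso (CommRingCat.of k)).inv.hom.FiniteType :=
      RingHom.FiniteType.of_surjective _
        (ConcreteCategory.bijective_of_isIso (Scheme.ΓSpecIso (CommRingCat.of k)).inv).2
    exact h1.comp h2
  -- a principal open inside U
  obtain ⟨z, hzW, hzU⟩ := hUdense.inter_open_nonempty W W.isOpen hne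
  obtain ⟨g, hgU, hzg⟩ := hW.exists_basicOpen_le (V := ⟨U, hUopen⟩) ⟨z, hzU⟩ hzW
  have hg : g ≠ 0 := by
    rintro rfl
    simp at hzg
  obtain ⟨c, hc, H⟩ := aux_field j hj φ hφ hφi g hg
  refine ⟨B.basicOpen c, (B.basicOpen c).isOpen, ?_, ?_⟩
  · rw [Set.nonempty_iff_ne_empty]
    intro h
    exact hc ((basicOpen_eq_bot_iff c).mp (TopologicalSpace.Opens.ext h))
  · intro x hxW hxc
    have hxr : x ∈ Set.range hW.fromSpec := by rw [hW.range_fromSpec]; exact hxW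
    obtain ⟨q, rfl⟩ := hxr
    have hsq : ∀ p : Spec Γ(E, W), f (hW.fromSpec p) =
        hV.fromSpec (Spec.map (f.appLE V W hWV) p) := by
      intro p
      rw [← Scheme.Hom.comp_apply, ← Scheme.Hom.comp_apply, hV.SpecMap_appLE_fromSpec f hW hWV]
    have hcq : φ c ∉ q.asIdeal := by
      rw [hsq] at hxc
      have h1 : Spec.map (f.appLE V W hWV) q ∈ hV.fromSpec ⁻¹ᵁ B.basicOpen c := hxc
      rw [hV.fromSpec_preimage_basicOpen] at h1
      exact h1
    obtain ⟨q', hq', hle, hgq, hcomap⟩ := H q.asIdeal q.isPrime hcq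
    let y : Spec Γ(E, W) := (⟨q', hq'⟩ : PrimeSpectrum Γ(E, W))
    refine ⟨hW.fromSpec y, ?_, ?_, ?_⟩
    · apply hgU
      have h1 : y ∈ hW.fromSpec ⁻¹ᵁ E.basicOpen g := by
        rw [hW.fromSpec_preimage_basicOpen]
        exact hgq
      exact h1
    · have h1 : y ⤳ q := (PrimeSpectrum.le_iff_specializes _ _).mp hle
      exact h1.map hW.fromSpec.continuous
    · rw [hsq, hsq]
      congr 1
      exact PrimeSpectrum.ext hcomap

/-- Let `f : E → B` be a dominant morphism of irreducible varieties
(integral, separated schemes of finite type) over an algebraically closed field `k`, and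
let `U ⊆ E` be a dense open subset.  Then there exists a dense open subset `B₀ ⊆ B` such
that for all `b ∈ B₀` the intersection `f⁻¹(b) ∩ U` is dense in the fibre `f⁻¹(b)`. -/
theorem stmt2 {k : Type} [Field k] [IsAlgClosed k]
    {E B : Scheme} (sE : E ⟶ Spec (CommRingCat.of k)) (sB : B ⟶ Spec (CommRingCat.of k))
    [IsIntegral E] [IsIntegral B]
    [LocallyOfFiniteType sE] [LocallyOfFiniteType sB]
    [QuasiCompact sE] [QuasiCompact sB] [IsSeparated sE] [IsSeparated sB]
    (f : E ⟶ B) (hf : f ≫ sB = sE) [IsDominant f]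
    (U : Set E) (hUopen : IsOpen U) (hUdense : Dense U) :
    ∃ B₀ : Set B, IsOpen B₀ ∧ Dense B₀ ∧ ∀ b ∈ B₀,
      (f.base ⁻¹' {b} : Set E) ⊆ closure (f.base ⁻¹' {b} ∩ U) := by
  have hfc : LocallyOfFiniteType (f ≫ sB) := hf ▸ inferInstance
  have : LocallyOfFiniteType f := locallyOfFiniteType_of_comp f sB
  have hqc : QuasiCompact (f ≫ sB) := hf ▸ inferInstance
  have : QuasiCompact f := QuasiCompact.of_comp f sB
  obtain ⟨_, ⟨V, hV, rfl⟩, hηV, -⟩ :=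
    B.isBasis_affineOpens.exists_subset_of_mem_open (Set.mem_univ (genericPoint B)) isOpen_univ
  have hVc : IsCompact ((f ⁻¹ᵁ V : E.Opens) : Set E) :=
    f.isCompact_preimage hV.isCompact
  have key : f ⁻¹ᵁ V ≤ f ⁻¹ᵁ V → ∃ B₀ : Set B, IsOpen B₀ ∧ B₀.Nonempty ∧
      ∀ x ∈ f ⁻¹ᵁ V, f x ∈ B₀ → ∃ y ∈ U, y ⤳ x ∧ f y = f x := by
    refine compact_open_induction_on (P := fun W => W ≤ f ⁻¹ᵁ V → ∃ B₀ : Set B, IsOpen B₀ ∧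
      B₀.Nonempty ∧ ∀ x ∈ W, f x ∈ B₀ → ∃ y ∈ U, y ⤳ x ∧ f y = f x) _ hVc ?_ ?_
    · intro _
      exact ⟨Set.univ, isOpen_univ, ⟨genericPoint B, trivial⟩, fun x hx => hx.elim⟩
    · intro W _ W' ih hle
      obtain ⟨B₁, h₁o, h₁n, h₁⟩ := ih (le_sup_left.trans hle)
      rcases Set.eq_empty_or_nonempty ((W' : E.Opens) : Set E) with hemp | hne
      · refine ⟨B₁, h₁o, h₁n, fun x hx => h₁ x ?_⟩
        rcases hx with hx | hx
        · exact hx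
        · exact absurd hx (by rw [hemp]; exact Set.notMem_empty x)
      · obtain ⟨B₂, h₂o, h₂n, h₂⟩ := aux_geo sB f U hUopen hUdense V hV W' W'.2
          (le_sup_right.trans hle) hne
        refine ⟨B₁ ∩ B₂, h₁o.inter h₂o, nonempty_preirreducible_inter h₁o h₂o h₁n h₂n, ?_⟩
        rintro x (hx | hx) hxB
        · exact h₁ x hx hxB.1
        · exact h₂ x hx hxB.2
  obtain ⟨B₁, h₁o, h₁n, h₁⟩ := key le_rfl
  refine ⟨V ∩ B₁, V.isOpen.inter h₁o, (V.isOpen.inter h₁o).dense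
    (nonempty_preirreducible_inter V.isOpen h₁o ⟨_, hηV⟩ h₁n), ?_⟩
  rintro b hb x rfl
  obtain ⟨y, hyU, hyx, hfy⟩ := h₁ x hb.1 hb.2
  exact hyx.mem_closed isClosed_closure (subset_closure ⟨hfy, hyU⟩)
end

section
/- Let k ⊆ K be a field extension with K algebraically closed, and let I ⊆ K[x₁,…,xₘ] be an ideal invariant under all field automorphisms of K fixing k pointwise. If k is perfect (or more generally under Weil's hypotheses), then I is generated by its intersection with k[x₁,…,xₘ], i.e., (I ∩ k[x₁,…,xₘ])·K[x₁,…,xₘ] = I. -/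
open MvPolynomial in
theorem aux_extend {R K ι : Type*} [Field R] [Field K] [Algebra R K] [IsAlgClosed K]
    (x : ι → K) (hx : IsTranscendenceBasis R x)
    (e : MvPolynomial ι R ≃+* MvPolynomial ι R) :
    ∃ σ : K ≃+* K, ∀ p, σ (aeval x p) = aeval x (e p) := by
  let := IsAlgClosed.isAlgClosure_of_transcendence_basis x hx
  let e' : Algebra.adjoin R (Set.range x) ≃+* Algebra.adjoin R (Set.range x) :=
    (hx.1.aevalEquiv.symm.toRingEquiv.trans e).trans hx.1.aevalEquiv.toRingEquiv
  refine ⟨IsAlgClosure.equivOfEquiv K K e', fun p => ?_⟩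
  have h := IsAlgClosure.equivOfEquiv_algebraMap K K e' (hx.1.aevalEquiv p)
  have h1 : ∀ q, algebraMap (Algebra.adjoin R (Set.range x)) K (hx.1.aevalEquiv q) = aeval x q :=
    fun q => hx.1.algebraMap_aevalEquiv q
  rw [h1] at h
  rw [h, ← h1]
  simp [e']

open MvPolynomial in
theorem aux_transc {k K : Type*} [Field k] [Field K] [Algebra k K] [IsAlgClosed K]
    (a : K) (ha : Transcendental k a) : ∃ σ : K ≃ₐ[k] K, σ a ≠ a := by
  classical
  obtain ⟨s, hs, hb⟩ := exists_isTranscendenceBasis_superset (R := k) (s := ({a} : Set K))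
    (algebraicIndependent_singleton_iff (⟨a, rfl⟩ : ({a} : Set K)) |>.2 ha)
  let i : s := ⟨a, hs rfl⟩
  let e : MvPolynomial s k ≃ₐ[k] MvPolynomial s k := AlgEquiv.ofAlgHom
    (aeval fun j => X j + if j = i then 1 else 0) (aeval fun j => X j - if j = i then 1 else 0)
    (by ext j : 1; by_cases h : j = i <;> simp [h])
    (by ext j : 1; by_cases h : j = i <;> simp [h])
  obtain ⟨σ, hσ⟩ := aux_extend _ hb e.toRingEquiv
  refine ⟨AlgEquiv.ofRingEquiv (f := σ) fun r => ?_, ?_⟩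
  · have h1 := hσ (C r)
    have h2 : e.toRingEquiv (C r) = C r := e.commutes r
    rw [h2] at h1
    simpa using h1
  · have := hσ (X i)
    simp only [aeval_X] at this
    simp only [AlgEquiv.ofRingEquiv_apply]
    change σ (i : K) ≠ a
    rw [this]
    simp [e, i]

open MvPolynomial in
theorem aux_alg {k K : Type*} [Field k] [Field K] [Algebra k K] [IsAlgClosed K] [PerfectField k]
    (a : K) (ha : IsAlgebraic k a) (hfix : ∀ σ : K ≃ₐ[k] K, σ a = a) :
    a ∈ Set.range (algebraMap k K) := by
  let A := algebraicClosure k K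
  obtain ⟨ι, x, hx⟩ := exists_isTranscendenceBasis' A K
  have : IsAlgClosure k A := inferInstance
  have : Normal k A := IsAlgClosure.normal k A
  have : IsGalois k A := ⟨⟩
  let a' : A := ⟨a, mem_algebraicClosure_iff.2 ha⟩
  have key : a' ∈ Set.range (algebraMap k A) := by
    rw [InfiniteGalois.mem_range_algebraMap_iff_fixed]
    intro τ
    obtain ⟨σ, hσ⟩ := aux_extend x hx (mapEquiv ι τ.toRingEquiv)
    have h : ∀ r : A, σ (r : K) = (τ r : A) := fun r => by
      have := hσ (C r)
      simpa using this
    have := hfix (AlgEquiv.ofRingEquiv (f := σ) fun r => by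
      have := h (algebraMap k A r)
      rw [AlgEquiv.commutes] at this
      exact this)
    rw [AlgEquiv.ofRingEquiv_apply] at this
    apply Subtype.ext
    rw [← h]
    exact this
  obtain ⟨r, hr⟩ := key
  exact ⟨r, congrArg Subtype.val hr⟩

theorem aux_fixed {k K : Type*} [Field k] [Field K] [Algebra k K] [IsAlgClosed K] [PerfectField k]
    (a : K) (hfix : ∀ σ : K ≃ₐ[k] K, σ a = a) :
    a ∈ Set.range (algebraMap k K) := by
  by_cases ha : IsAlgebraic k a
  · exact aux_alg a ha hfix
  · obtain ⟨σ, hσ⟩ := aux_transc a ha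
    exact absurd (hfix σ) hσ

/-- A nonzero element of `I` of support inside that of `f`, with coefficients in `k`. -/
theorem aux_exists {k K : Type*} [Field k] [Field K] [Algebra k K] [IsAlgClosed K]
    [PerfectField k] (m : ℕ) (I : Ideal (MvPolynomial (Fin m) K))
    (hinv : ∀ σ : K ≃ₐ[k] K, ∀ f ∈ I, MvPolynomial.map (σ.toRingEquiv.toRingHom) f ∈ I)
    (f : MvPolynomial (Fin m) K) (hf : f ∈ I) (hf0 : f ≠ 0) :
    ∃ g : MvPolynomial (Fin m) k, MvPolynomial.map (algebraMap k K) g ∈ I ∧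
      (MvPolynomial.map (algebraMap k K) g).support ⊆ f.support ∧
      ∃ d ∈ f.support, (MvPolynomial.map (algebraMap k K) g).coeff d = 1 := by
  classical
  induction hn : f.support.card using Nat.strong_induction_on generalizing f with
  | _ n ih =>
  obtain ⟨d, hd⟩ := MvPolynomial.ne_zero_iff.1 hf0
  by_cases hall : ∃ h ∈ I, h ≠ 0 ∧ h.support ⊂ f.support
  · obtain ⟨h, hI, h0, hs⟩ := hall
    obtain ⟨g, hg, hgs, d, hd, hd1⟩ := ih _ (hn ▸ Finset.card_lt_card hs) h hI h0 rfl
    exact ⟨g, hg, hgs.trans hs.1, d, hs.1 hd, hd1⟩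
  push Not at hall
  let g := MvPolynomial.C (f.coeff d)⁻¹ * f
  have hgI : g ∈ I := I.mul_mem_left _ hf
  have hgs : g.support ⊆ f.support := by
    intro e he
    rw [MvPolynomial.mem_support_iff, MvPolynomial.coeff_C_mul] at he
    exact MvPolynomial.mem_support_iff.2 (right_ne_zero_of_mul he)
  have hgd : g.coeff d = 1 := by
    rw [MvPolynomial.coeff_C_mul, inv_mul_cancel₀ hd]
  have hfix : ∀ σ : K ≃ₐ[k] K, ∀ e, σ (g.coeff e) = g.coeff e := by
    intro σ e
    by_contra hne
    have hcoe : ∀ e, (MvPolynomial.map (σ.toRingEquiv.toRingHom) g - g).coeff e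
        = σ (g.coeff e) - g.coeff e := fun e => by
      rw [MvPolynomial.coeff_sub, MvPolynomial.coeff_map]; rfl
    refine hall (MvPolynomial.map (σ.toRingEquiv.toRingHom) g - g)
      (I.sub_mem (hinv σ g hgI) hgI) ?_ ?_
    · intro h0
      have := hcoe e
      rw [h0, MvPolynomial.coeff_zero] at this
      exact hne (sub_eq_zero.1 this.symm)
    · rw [Finset.ssubset_iff_of_subset]
      · refine ⟨d, MvPolynomial.mem_support_iff.2 hd, ?_⟩
        rw [MvPolynomial.notMem_support_iff, hcoe, hgd, map_one, sub_self]
      · intro e he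
        rw [MvPolynomial.mem_support_iff, hcoe] at he
        refine hgs (MvPolynomial.mem_support_iff.2 fun h => he ?_)
        rw [h, map_zero, sub_self]
  have hmem : g ∈ Set.range (MvPolynomial.map (algebraMap k K) :
      MvPolynomial (Fin m) k →+* _) := by
    rw [MvPolynomial.mem_range_map_iff_coeffs_subset]
    intro c hc
    obtain ⟨e, he, rfl⟩ := MvPolynomial.mem_coeffs_iff.1 hc
    exact aux_fixed _ fun σ => hfix σ e
  obtain ⟨g', hg'⟩ := hmem
  refine ⟨g', ?_⟩
  rw [hg']
  exact ⟨hgI, hgs, d, MvPolynomial.mem_support_iff.2 hd, hgd⟩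

/-- Let `k ⊆ K` be a field extension with `K` algebraically closed and
`k` perfect, and let `I ⊆ K[x₁,…,xₘ]` be an ideal invariant under all field automorphisms
of `K` fixing `k` pointwise (acting coefficientwise).  Then `I` is generated by its
intersection with `k[x₁,…,xₘ]`:  `(I ∩ k[x₁,…,xₘ]) · K[x₁,…,xₘ] = I`. -/
theorem stmt8 {k K : Type*} [Field k] [Field K] [Algebra k K] [IsAlgClosed K]
    [PerfectField k] (m : ℕ) (I : Ideal (MvPolynomial (Fin m) K))
    (hinv : ∀ σ : K ≃ₐ[k] K,
      Ideal.map (MvPolynomial.map (σ.toRingEquiv.toRingHom)) I = I) :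
    Ideal.map (MvPolynomial.map (algebraMap k K))
      (Ideal.comap (MvPolynomial.map (algebraMap k K)) I) = I := by
  classical
  have hinv' : ∀ σ : K ≃ₐ[k] K, ∀ f ∈ I, MvPolynomial.map (σ.toRingEquiv.toRingHom) f ∈ I :=
    fun σ f hf => by
      have := Ideal.mem_map_of_mem (MvPolynomial.map (σ.toRingEquiv.toRingHom)) hf
      rwa [hinv σ] at this
  refine le_antisymm Ideal.map_comap_le fun f hf => ?_
  induction hn : f.support.card using Nat.strong_induction_on generalizing f with
  | _ n ih =>
  by_cases hf0 : f = 0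
  · rw [hf0]; exact Ideal.zero_mem _
  obtain ⟨g, hg, hgs, d, hd, hd1⟩ := aux_exists m I hinv' f hf hf0
  set G := MvPolynomial.map (algebraMap k K) g with hG
  have hGJ : G ∈ Ideal.map (MvPolynomial.map (algebraMap k K))
      (Ideal.comap (MvPolynomial.map (algebraMap k K)) I) := Ideal.mem_map_of_mem _ hg
  have hlt : (f - MvPolynomial.C (f.coeff d) * G).support ⊂ f.support := by
    rw [Finset.ssubset_iff_of_subset]
    · refine ⟨d, hd, ?_⟩
      rw [MvPolynomial.notMem_support_iff, MvPolynomial.coeff_sub, MvPolynomial.coeff_C_mul, hd1,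
        mul_one, sub_self]
    · intro e he
      by_contra h
      have h2 : e ∉ G.support := fun h' => h (hgs h')
      rw [MvPolynomial.notMem_support_iff] at h h2
      rw [MvPolynomial.mem_support_iff, MvPolynomial.coeff_sub, MvPolynomial.coeff_C_mul, h, h2,
        mul_zero, sub_self] at he
      exact he rfl
  have := ih _ (hn ▸ Finset.card_lt_card hlt) _ (I.sub_mem hf (I.mul_mem_left _ hg)) rfl
  have h3 := Ideal.add_mem _ this (Ideal.mul_mem_left _ (MvPolynomial.C (f.coeff d)) hGJ)
  rwa [sub_add_cancel] at h3
end
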